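/- Let K be an abelian group, R a commutative K-graded ring without K-homogeneous zero divisors, and K' a subgroup of K such that R is K'-associated. Then R is factorially K-graded if and only if the Veronese subalgebra R_{K'} is factorially K'-graded. -/

import Mathlib

/-!
The point is that for elements homogeneous of degree in `K'`, divisibility and invertibility mean
the same in `R` and in `R_{K'}`: if `g = f * c` with `f ∈ R_w`, `g ∈ R_v`, then `c` may be replaced
by its component of degree `v - w ∈ K'` (`dvdIn_iff`, `isUnitIn_iff`). Moreover the inverse of a
homogeneous unit is homogeneous, so by `K'`-associatedness every homogeneous element is a
homogeneous unit times one homogeneous of degree in `K'` (`exists_unit_mul_vHomog`). Hence an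
element homogeneous of degree in `K'` is `K'`-prime in `R_{K'}` iff it is `K`-prime in `R`
(`vPrime_iff`), and factorizations carry over in both directions after absorbing a homogeneous unit
into one of the factors (`exists_absorb`). For a factorization of an element of degree in `K'`, the
unit to be absorbed has degree in `K'` by comparison of degrees.
-/

/-! Definitions for factorially graded rings, following B. Bechtold,
"Factorially graded rings and Cox rings". -/

section Defs

variable {K R : Type*} [CommRing R]

/-- An element is `K`-homogeneous w.r.t. the grading `𝒜` if it lies in some component. -/
def Homog (𝒜 : K → AddSubgroup R) (f : R) : Prop :=
  ∃ w, f ∈ 𝒜 w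

/-- `R` has no `K`-homogeneous zero divisors: the product of two nonzero homogeneous
elements is nonzero. -/
def NoHomogZeroDivisors (𝒜 : K → AddSubgroup R) : Prop :=
  ∀ f g : R, Homog 𝒜 f → Homog 𝒜 g → f ≠ 0 → g ≠ 0 → f * g ≠ 0

/-- A nonzero homogeneous non-unit `f` is `K`-prime if whenever it divides a product of
homogeneous elements, it divides one of the factors. -/
def KPrime (𝒜 : K → AddSubgroup R) (f : R) : Prop :=
  f ≠ 0 ∧ ¬IsUnit f ∧ Homog 𝒜 f ∧
    ∀ g h : R, Homog 𝒜 g → Homog 𝒜 h → f ∣ g * h → f ∣ g ∨ f ∣ h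

/-- A nonzero homogeneous non-unit `f` is `K`-irreducible if in any factorization of `f`
into two homogeneous factors one of the factors is a unit. -/
def KIrreducible (𝒜 : K → AddSubgroup R) (f : R) : Prop :=
  f ≠ 0 ∧ ¬IsUnit f ∧ Homog 𝒜 f ∧
    ∀ g h : R, Homog 𝒜 g → Homog 𝒜 h → f = g * h → IsUnit g ∨ IsUnit h

/-- `R` is factorially `K`-graded: every nonzero homogeneous non-unit is a product of
`K`-prime elements. -/
def FactoriallyGraded (𝒜 : K → AddSubgroup R) : Prop :=
  ∀ f : R, Homog 𝒜 f → f ≠ 0 → ¬IsUnit f →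
    ∃ l : Multiset R, (∀ p ∈ l, KPrime 𝒜 p) ∧ l.prod = f

/-- `R` is `K`-noetherian: every ideal generated by homogeneous elements is generated by
finitely many homogeneous elements. -/
def KNoetherian (𝒜 : K → AddSubgroup R) : Prop :=
  ∀ s : Set R, (∀ x ∈ s, Homog 𝒜 x) →
    ∃ t : Finset R, (∀ x ∈ t, Homog 𝒜 x) ∧ Ideal.span (t : Set R) = Ideal.span s

end Defs

section Graded

variable {K R : Type*} [AddCommGroup K] [CommRing R]

/-- The Veronese subalgebra `R_{K'} = ⊕_{w ∈ K'} R_w` (as an additive subgroup of `R`). -/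
def Veronese (𝒜 : K → AddSubgroup R) (K' : AddSubgroup K) : AddSubgroup R :=
  ⨆ w ∈ K', 𝒜 w

/-- Homogeneous of some degree belonging to the subgroup `K'`. -/
def VHomog (𝒜 : K → AddSubgroup R) (K' : AddSubgroup K) (f : R) : Prop :=
  ∃ w ∈ K', f ∈ 𝒜 w

/-- Divisibility within a subset `V` of `R` (e.g. within a Veronese subring). -/
def DvdIn (V : Set R) (f g : R) : Prop :=
  ∃ c ∈ V, g = f * c

/-- Being a unit within a subset `V` of `R` (e.g. within a Veronese subring). -/
def IsUnitIn (V : Set R) (f : R) : Prop :=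
  ∃ c ∈ V, f * c = 1

/-- `f` is `K'`-prime in the Veronese subring `R_{K'}` with its `K'`-grading. -/
def VPrime (𝒜 : K → AddSubgroup R) (K' : AddSubgroup K) (f : R) : Prop :=
  f ≠ 0 ∧ ¬IsUnitIn (Veronese 𝒜 K' : Set R) f ∧ VHomog 𝒜 K' f ∧
    ∀ g h : R, VHomog 𝒜 K' g → VHomog 𝒜 K' h →
      DvdIn (Veronese 𝒜 K' : Set R) f (g * h) →
        DvdIn (Veronese 𝒜 K' : Set R) f g ∨ DvdIn (Veronese 𝒜 K' : Set R) f h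

/-- The Veronese subring `R_{K'}` is factorially `K'`-graded. -/
def VFactorial (𝒜 : K → AddSubgroup R) (K' : AddSubgroup K) : Prop :=
  ∀ f : R, VHomog 𝒜 K' f → f ≠ 0 → ¬IsUnitIn (Veronese 𝒜 K' : Set R) f →
    ∃ l : Multiset R, (∀ p ∈ l, VPrime 𝒜 K' p) ∧ l.prod = f

/-- `R` is `K'`-associated: every homogeneous element of `R` is a homogeneous unit times an
element of the Veronese subalgebra `R_{K'}`. -/
def KAssociated (𝒜 : K → AddSubgroup R) (K' : AddSubgroup K) : Prop :=
  ∀ f : R, Homog 𝒜 f → ∃ u r : R, Homog 𝒜 u ∧ IsUnit u ∧ r ∈ Veronese 𝒜 K' ∧ f = u * r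

/-- `ℬ` is the natural `K`-grading on the localization `R' = S⁻¹R`, i.e.
`(S⁻¹R)_w = { r/s : r ∈ R_{deg s + w} }`. -/
def LocGrading (𝒜 : K → AddSubgroup R) (S : Submonoid R) (R' : Type*) [CommRing R']
    [Algebra R R'] (ℬ : K → AddSubgroup R') : Prop :=
  ∀ (w : K) (x : R'), x ∈ ℬ w ↔
    ∃ (r s : R) (v : K), s ∈ S ∧ s ∈ 𝒜 v ∧ r ∈ 𝒜 (v + w) ∧
      x * algebraMap R R' s = algebraMap R R' r

/-- The `K`-grading on the polynomial ring `R[T]` extending `𝒜`, in which `T` is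
homogeneous of degree `w`: the degree-`d` part is spanned by the monomials `a·Tⁿ`
with `a ∈ R_{d - n·w}`. -/
def polyGrading (𝒜 : K → AddSubgroup R) (w : K) : K → AddSubgroup (Polynomial R) :=
  fun d =>
    { carrier := { f : Polynomial R | ∀ n : ℕ, f.coeff n ∈ 𝒜 (d - n • w) }
      zero_mem' := by
        intro n
        rw [Polynomial.coeff_zero]
        exact zero_mem _
      add_mem' := by
        intro f g hf hg n
        rw [Polynomial.coeff_add]
        exact add_mem (hf n) (hg n)
      neg_mem' := by
        intro f hf n
        rw [Polynomial.coeff_neg]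
        exact neg_mem (hf n) }

/-- The coarsened `K`-grading associated with a `K ⊕ ℤᵐ`-grading (or any grading by a
product group): the component of degree `w ∈ K` is `⊕_v R_{(w,v)}`. -/
def coarsen {V : Type*} (𝒜 : K × V → AddSubgroup R) : K → AddSubgroup R :=
  fun w => ⨆ v : V, 𝒜 (w, v)

end Graded

section Helpers

variable {K R : Type*} [AddCommGroup K] [CommRing R]
  {𝒜 : K → AddSubgroup R} {K' : AddSubgroup K}

lemma VHomog.homog {f : R} (hf : VHomog 𝒜 K' f) : Homog 𝒜 f :=
  let ⟨w, _, h⟩ := hf; ⟨w, h⟩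

lemma VHomog.mem_veronese {f : R} (hf : VHomog 𝒜 K' f) : f ∈ Veronese 𝒜 K' := by
  obtain ⟨w, hw, h⟩ := hf
  exact AddSubgroup.mem_iSup_of_mem w (AddSubgroup.mem_iSup_of_mem hw h)

variable [DecidableEq K] [GradedRing 𝒜]

lemma Homog.mul {f g : R} (hf : Homog 𝒜 f) (hg : Homog 𝒜 g) : Homog 𝒜 (f * g) := by
  obtain ⟨v, hv⟩ := hf
  obtain ⟨w, hw⟩ := hg
  exact ⟨v + w, SetLike.mul_mem_graded hv hw⟩

lemma VHomog.mul {f g : R} (hf : VHomog 𝒜 K' f) (hg : VHomog 𝒜 K' g) :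
    VHomog 𝒜 K' (f * g) := by
  obtain ⟨v, hvK, hv⟩ := hf
  obtain ⟨w, hwK, hw⟩ := hg
  exact ⟨v + w, add_mem hvK hwK, SetLike.mul_mem_graded hv hw⟩

lemma vHomog_one : VHomog 𝒜 K' (1 : R) := ⟨0, zero_mem _, SetLike.GradedOne.one_mem⟩

/-- A cofactor between homogeneous elements can be replaced by its homogeneous component of the
expected degree. -/
lemma exists_cofactor {f g c : R} {w v : K} (hf : f ∈ 𝒜 w) (hg : g ∈ 𝒜 v) (h : g = f * c) :
    ∃ c' ∈ 𝒜 (v - w), g = f * c' := by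
  refine ⟨DirectSum.decompose 𝒜 c (v - w), SetLike.coe_mem _, ?_⟩
  have h1 := DirectSum.coe_decompose_mul_add_of_left_mem 𝒜 (i := w) (j := v - w) (b := c) hf
  rw [← h, add_sub_cancel, DirectSum.decompose_of_mem_same 𝒜 hg] at h1
  exact h1

lemma dvdIn_iff {f g : R} (hf : VHomog 𝒜 K' f) (hg : VHomog 𝒜 K' g) :
    DvdIn (Veronese 𝒜 K' : Set R) f g ↔ f ∣ g := by
  constructor
  · rintro ⟨c, _, h⟩
    exact ⟨c, h⟩
  · rintro ⟨c, h⟩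
    obtain ⟨w, hwK, hw⟩ := hf
    obtain ⟨v, hvK, hv⟩ := hg
    obtain ⟨c', hc', h'⟩ := exists_cofactor hw hv h
    exact ⟨c', VHomog.mem_veronese ⟨v - w, sub_mem hvK hwK, hc'⟩, h'⟩

lemma isUnitIn_iff {f : R} (hf : VHomog 𝒜 K' f) :
    IsUnitIn (Veronese 𝒜 K' : Set R) f ↔ IsUnit f := by
  rw [isUnit_iff_dvd_one, ← dvdIn_iff hf vHomog_one]
  simp only [IsUnitIn, DvdIn, eq_comm]

lemma exists_homog_inv {u : R} (hu : Homog 𝒜 u) (hunit : IsUnit u) :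
    ∃ c, Homog 𝒜 c ∧ u * c = 1 := by
  obtain ⟨w, hw⟩ := hu
  obtain ⟨c, hc⟩ := hunit.dvd
  obtain ⟨c', hc', h'⟩ := exists_cofactor hw (SetLike.GradedOne.one_mem (A := 𝒜)) hc
  exact ⟨c', ⟨_, hc'⟩, h'.symm⟩

lemma mem_of_mem_veronese {r : R} {w : K} (hr : r ∈ Veronese 𝒜 K') (hw : r ∈ 𝒜 w)
    (h0 : r ≠ 0) : w ∈ K' := by
  by_contra hwK
  -- The projection to degree `w ∉ K'` kills the Veronese subalgebra.
  have key : Veronese 𝒜 K' ≤ (GradedRing.proj 𝒜 w).ker := by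
    refine iSup₂_le fun v hv x hx => ?_
    have hne : v ≠ w := fun h => hwK (h ▸ hv)
    rw [AddMonoidHom.mem_ker, GradedRing.proj_apply]
    exact DirectSum.decompose_of_mem_ne 𝒜 hx hne
  have h := key hr
  rw [AddMonoidHom.mem_ker, GradedRing.proj_apply, DirectSum.decompose_of_mem_same 𝒜 hw] at h
  exact h0 h

/-- In the definition of `K'`-associated, the factor in the Veronese subalgebra can be taken
homogeneous. -/
lemma exists_unit_mul_vHomog (hassoc : KAssociated 𝒜 K') {f : R} (hf : Homog 𝒜 f) :
    ∃ u r, Homog 𝒜 u ∧ IsUnit u ∧ VHomog 𝒜 K' r ∧ f = u * r := by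
  by_cases h0 : f = 0
  · exact ⟨1, 0, vHomog_one (K' := K').homog, isUnit_one, ⟨0, zero_mem _, zero_mem _⟩, by simp [h0]⟩
  obtain ⟨u, r, hu, hunit, hr, h⟩ := hassoc f hf
  refine ⟨u, r, hu, hunit, ?_, h⟩
  obtain ⟨c, hc, huc⟩ := exists_homog_inv hu hunit
  have hrc : r = c * f := by
    rw [h, ← mul_assoc, mul_comm c, huc, one_mul]
  obtain ⟨w, hw⟩ := hc.mul hf
  rw [← hrc] at hw
  refine ⟨w, mem_of_mem_veronese hr hw ?_, hw⟩
  rintro rfl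
  exact h0 (by simpa using h)

lemma KPrime.unit_mul {u p : R} (hu : Homog 𝒜 u) (hunit : IsUnit u) (hp : KPrime 𝒜 p) :
    KPrime 𝒜 (u * p) := by
  obtain ⟨h0, hnu, hh, hd⟩ := hp
  refine ⟨fun h => h0 ((hunit.mul_right_eq_zero).1 h), fun h => hnu (isUnit_of_mul_isUnit_right h),
    hu.mul hh, fun g h hg hhm hdvd => ?_⟩
  rw [hunit.mul_left_dvd] at hdvd ⊢
  rw [hunit.mul_left_dvd]
  exact hd g h hg hhm hdvd

lemma vPrime_iff (hassoc : KAssociated 𝒜 K') {f : R} :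
    VPrime 𝒜 K' f ↔ KPrime 𝒜 f ∧ VHomog 𝒜 K' f := by
  constructor
  · rintro ⟨h0, hnu, hv, hd⟩
    refine ⟨⟨h0, fun h => hnu ((isUnitIn_iff hv).2 h), hv.homog, fun g h hg hh hdvd => ?_⟩, hv⟩
    obtain ⟨u, g', -, hu, hg', rfl⟩ := exists_unit_mul_vHomog hassoc hg
    obtain ⟨v, h', -, hv', hh', rfl⟩ := exists_unit_mul_vHomog hassoc hh
    rw [mul_mul_mul_comm, (hu.mul hv').dvd_mul_left] at hdvd
    rw [hu.dvd_mul_left, hv'.dvd_mul_left, ← dvdIn_iff hv hg', ← dvdIn_iff hv hh']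
    exact hd g' h' hg' hh' ((dvdIn_iff hv (hg'.mul hh')).2 hdvd)
  · rintro ⟨⟨h0, hnu, -, hd⟩, hv⟩
    refine ⟨h0, fun h => hnu ((isUnitIn_iff hv).1 h), hv, fun g h hg hh hdvd => ?_⟩
    rw [dvdIn_iff hv hg, dvdIn_iff hv hh]
    exact hd g h hg.homog hh.homog ((dvdIn_iff hv (hg.mul hh)).1 hdvd)

/-- A factor `u` can be absorbed into one member of a nonempty family of factors. -/
lemma exists_absorb {Q : R → Prop} {u : R} {l : Multiset R} (hl : ∀ p ∈ l, Q p) (hne : l ≠ 0)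
    (hQ : ∀ p, Q p → Q (u * p)) : ∃ l' : Multiset R, (∀ p ∈ l', Q p) ∧ l'.prod = u * l.prod := by
  obtain ⟨a, ha⟩ := Multiset.exists_mem_of_ne_zero hne
  obtain ⟨t, rfl⟩ := Multiset.exists_cons_of_mem ha
  refine ⟨(u * a) ::ₘ t, fun p hp => ?_, by simp [mul_assoc]⟩
  rcases Multiset.mem_cons.1 hp with rfl | hp
  · exact hQ a (hl a ha)
  · exact hl p (Multiset.mem_cons_of_mem hp)

/-- A product of `K`-primes equals, up to a homogeneous unit, a product of `K`-primes of degree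
in `K'`. -/
lemma exists_normalize (hassoc : KAssociated 𝒜 K') (l : Multiset R) (hl : ∀ p ∈ l, KPrime 𝒜 p) :
    ∃ (u : R) (l' : Multiset R), Homog 𝒜 u ∧ IsUnit u ∧
      (∀ p ∈ l', KPrime 𝒜 p ∧ VHomog 𝒜 K' p) ∧ VHomog 𝒜 K' l'.prod ∧ l.prod = u * l'.prod := by
  induction l using Multiset.induction_on with
  | empty =>
    exact ⟨1, 0, vHomog_one (K' := K').homog, isUnit_one, by simp, by simpa using vHomog_one,
      by simp⟩
  | cons a t ih =>
    obtain ⟨u, l', hu, hunit, hl', hprod, heq⟩ :=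
      ih fun p hp => hl p (Multiset.mem_cons_of_mem hp)
    have ha := hl a (Multiset.mem_cons_self a t)
    obtain ⟨v, r, hv, hvunit, hr, har⟩ := exists_unit_mul_vHomog hassoc ha.2.2.1
    obtain ⟨c, hc, hvc⟩ := exists_homog_inv hv hvunit
    have hra : r = c * a := by rw [har, ← mul_assoc, mul_comm c, hvc, one_mul]
    have hrp : KPrime 𝒜 r := hra ▸ ha.unit_mul hc (IsUnit.of_mul_eq_one v (by rw [mul_comm, hvc]))
    refine ⟨v * u, r ::ₘ l', hv.mul hu, hvunit.mul hunit, fun p hp => ?_, ?_, ?_⟩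
    · rcases Multiset.mem_cons.1 hp with rfl | hp
      · exact ⟨hrp, hr⟩
      · exact hl' p hp
    · rw [Multiset.prod_cons]
      exact hr.mul hprod
    · rw [Multiset.prod_cons, Multiset.prod_cons, heq, har, mul_mul_mul_comm]

end Helpers

/-- Lemma 2.4 (ii). If `R` is `K`-graded without homogeneous zero
divisors and `K'`-associated for a subgroup `K' ≤ K`, then `R` is factorially `K`-graded
iff the Veronese subalgebra `R_{K'}` is factorially `K'`-graded. -/
theorem statement_10 {K R : Type*} [AddCommGroup K] [DecidableEq K] [CommRing R]
    (𝒜 : K → AddSubgroup R) [GradedRing 𝒜]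
    (hzd : NoHomogZeroDivisors 𝒜)
    (K' : AddSubgroup K) (hassoc : KAssociated 𝒜 K') :
    FactoriallyGraded 𝒜 ↔ VFactorial 𝒜 K' := by
  constructor
  · intro H f hf h0 hnu
    rw [isUnitIn_iff hf] at hnu
    obtain ⟨l, hl, hlf⟩ := H f hf.homog h0 hnu
    obtain ⟨u, l', hu, hunit, hl', hprod, heq⟩ := exists_normalize hassoc l hl
    rw [hlf] at heq
    have huV : VHomog 𝒜 K' u := by
      obtain ⟨w, hwK, hw⟩ := hf
      obtain ⟨a, ha⟩ := hu
      obtain ⟨b, hbK, hb⟩ := hprod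
      have hab : f ∈ 𝒜 (a + b) := heq ▸ SetLike.mul_mem_graded ha hb
      have hdeg : w = a + b := DirectSum.degree_eq_of_mem_mem 𝒜 hw hab h0
      refine ⟨a, ?_, ha⟩
      rw [hdeg] at hwK
      exact (AddSubgroup.add_mem_cancel_right K' hbK).1 hwK
    have hne : l' ≠ 0 := by
      rintro rfl
      exact hnu (by simpa [heq] using hunit)
    obtain ⟨m, hm, hmf⟩ := exists_absorb hl' hne
      fun p hp => ⟨hp.1.unit_mul hu hunit, huV.mul hp.2⟩
    exact ⟨m, fun p hp => (vPrime_iff hassoc).2 (hm p hp), hmf.trans heq.symm⟩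
  · intro H f hf h0 hnu
    obtain ⟨u, r, hu, hunit, hr, rfl⟩ := exists_unit_mul_vHomog hassoc hf
    have hr0 : r ≠ 0 := by
      rintro rfl
      exact h0 (mul_zero u)
    have hrnu : ¬IsUnit r := fun h => hnu (hunit.mul h)
    obtain ⟨l, hl, hlr⟩ := H r hr hr0 (mt (isUnitIn_iff hr).1 hrnu)
    have hne : l ≠ 0 := by
      rintro rfl
      exact hrnu (by simp [← hlr])
    obtain ⟨m, hm, hmf⟩ := exists_absorb
      (fun p hp => ((vPrime_iff hassoc).1 (hl p hp)).1) hne fun p hp => hp.unit_mul hu hunit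
    exact ⟨m, hm, by rw [hmf, hlr]⟩
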